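/- arXiv:1501.05196 — 2 statements merged into one kernel-verified Lean document; each statement's English description precedes it below -/
import Mathlib

section
/- Let ℓ² be the space of real square-summable sequences with canonical basis (e_k), let y_k = (1/k)e_k, and let S = ∑_{k=1}^∞ y_k ∈ ℓ². Define F : [0,1] → L(ℝ,ℓ²) by F(t)x = x·∑_{k=1}^{n} y_k for t ∈ (1/(n+1), 1/n] (n ∈ ℕ, n ≥ 1) and F(0)x = x·S. Then F is of bounded semivariation with SV_0^1(F) = √(π²/6 − 1), SV_0^{1/2}(F) = √(π²/6 − 5/4), SV_{1/2}^1(F) = 1/2, so SV_0^1(F) < SV_0^{1/2}(F) + SV_{1/2}^1(F) (semivariation is not additive with respect to intervals); moreover, var_0^1(F) = ∞. -/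
open Filter Topology

/-- A division `a = α 0 < α 1 < … < α n = b` of the interval `[a,b]`. -/
def IsDivision (a b : ℝ) (n : ℕ) (α : ℕ → ℝ) : Prop :=
  α 0 = a ∧ α n = b ∧ ∀ i < n, α i < α (i + 1)

/-- The semivariation `SV_a^b(F)` of `F : [a,b] → L(X,Y)`. -/
noncomputable def semivar {X Y : Type*} [NormedAddCommGroup X] [NormedSpace ℝ X]
    [NormedAddCommGroup Y] [NormedSpace ℝ Y]
    (a b : ℝ) (F : ℝ → X →L[ℝ] Y) : ENNReal :=
  ⨆ (n : ℕ) (α : ℕ → ℝ) (_ : IsDivision a b n α)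
    (x : ℕ → X) (_ : ∀ j, ‖x j‖ ≤ 1),
    ENNReal.ofReal ‖∑ j ∈ Finset.range n, (F (α (j + 1)) - F (α j)) (x j)‖

/-- The (Jordan) variation `var_a^b(G)` of a function with values in a normed space. -/
noncomputable def evar {E : Type*} [NormedAddCommGroup E] (a b : ℝ) (G : ℝ → E) : ENNReal :=
  ⨆ (n : ℕ) (α : ℕ → ℝ) (_ : IsDivision a b n α),
    ENNReal.ofReal (∑ j ∈ Finset.range n, ‖G (α (j + 1)) - G (α j)‖)

/-- The space `ℓ²` of square-summable real sequences. -/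
noncomputable abbrev ellTwo : Type := lp (fun _ : ℕ => ℝ) 2

/-- `y k = (1/k) • e k`, where `e k` is the canonical basis of `ℓ²` (so `y 0 = 0`). -/
noncomputable def ySeq (k : ℕ) : ellTwo := ((k : ℝ)⁻¹) • lp.single 2 k (1 : ℝ)

/-- `S = ∑_{k=1}^∞ y k`. -/
noncomputable def Ssum : ellTwo := ∑' k, ySeq k

/-!
Every coordinate of `t ↦ F(t)1` is decreasing, so a sum `∑ (F(α (j+1)) - F(α j)) x j` with
`|x j| ≤ 1` is coordinatewise dominated by `F(a)1 - F(b)1`. Hence the trivial division already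
attains the semivariation, which is the `ℓ²`-norm of a block or tail of `S`. Over adjacent
intervals it is the squares of these norms that add up, not the norms. The variation, in contrast,
adds up the norms `1/n` of the individual jumps, which form the harmonic series.
-/

section General

variable {X Y E : Type*} [NormedAddCommGroup X] [NormedSpace ℝ X] [NormedAddCommGroup Y]
  [NormedSpace ℝ Y] [NormedAddCommGroup E] {a b : ℝ}

theorem IsDivision.monotoneOn {n : ℕ} {α : ℕ → ℝ} (hα : IsDivision a b n α) :
    MonotoneOn α (Set.Iic n) :=
  monotoneOn_of_le_add_one Set.ordConnected_Iic fun i _ _ hi =>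
    (hα.2.2 i (Nat.lt_of_succ_le hi)).le

theorem IsDivision.mem_Icc {n : ℕ} {α : ℕ → ℝ} (hα : IsDivision a b n α) {i : ℕ} (hi : i ≤ n) :
    α i ∈ Set.Icc a b := by
  constructor
  · exact hα.1 ▸ hα.monotoneOn (Nat.zero_le n) hi (Nat.zero_le i)
  · exact hα.2.1 ▸ hα.monotoneOn hi (Set.mem_Iic.2 le_rfl) hi

theorem ofReal_norm_sub_apply_le_semivar (hab : a < b) (F : ℝ → X →L[ℝ] Y) {x : X}
    (hx : ‖x‖ ≤ 1) : ENNReal.ofReal ‖F b x - F a x‖ ≤ semivar a b F := by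
  let α : ℕ → ℝ := fun j => if j = 0 then a else b
  have hα : IsDivision a b 1 α := ⟨by simp [α], by simp [α], by simpa [α] using hab⟩
  refine le_iSup_of_le 1 (le_iSup₂_of_le α hα (le_iSup₂_of_le (fun _ => x) (fun _ => hx) ?_))
  simp [α]

theorem abs_sum_mul_sub_le_of_antitoneOn {φ : ℝ → ℝ} (hφ : AntitoneOn φ (Set.Icc a b)) {n : ℕ}
    {α : ℕ → ℝ} (hα : IsDivision a b n α) {x : ℕ → ℝ} (hx : ∀ j, |x j| ≤ 1) :
    |∑ j ∈ Finset.range n, x j * (φ (α (j + 1)) - φ (α j))| ≤ φ a - φ b :=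
  calc |∑ j ∈ Finset.range n, x j * (φ (α (j + 1)) - φ (α j))|
      ≤ ∑ j ∈ Finset.range n, |x j * (φ (α (j + 1)) - φ (α j))| := Finset.abs_sum_le_sum_abs _ _
    _ ≤ ∑ j ∈ Finset.range n, (φ (α j) - φ (α (j + 1))) := by
        refine Finset.sum_le_sum fun j hj => ?_
        have hjn : j < n := Finset.mem_range.1 hj
        have hstep : φ (α (j + 1)) ≤ φ (α j) :=
          hφ (hα.mem_Icc hjn.le) (hα.mem_Icc hjn) (hα.2.2 j hjn).le
        rw [abs_mul, abs_sub_comm, abs_of_nonneg (sub_nonneg.2 hstep)]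
        exact mul_le_of_le_one_left (sub_nonneg.2 hstep) (hx j)
    _ = φ a - φ b := by rw [Finset.sum_range_sub', hα.1, hα.2.1]

theorem semivar_eq_of_antitoneOn_apply {ι : Type*} {p : ENNReal} [Fact (1 ≤ p)] (hab : a < b)
    {F : ℝ → ℝ →L[ℝ] lp (fun _ : ι => ℝ) p}
    (hF : ∀ i, AntitoneOn (fun t => F t 1 i) (Set.Icc a b)) :
    semivar a b F = ENNReal.ofReal ‖F b 1 - F a 1‖ := by
  refine le_antisymm ?_ (ofReal_norm_sub_apply_le_semivar hab F norm_one.le)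
  refine iSup_le fun n => iSup₂_le fun α hα => iSup₂_le fun x hx => ENNReal.ofReal_le_ofReal ?_
  refine lp.norm_mono (zero_lt_one.trans_le Fact.out).ne' fun i => ?_
  have hcoord : (∑ j ∈ Finset.range n, (F (α (j + 1)) - F (α j)) (x j)) i =
      ∑ j ∈ Finset.range n, x j * (F (α (j + 1)) 1 i - F (α j) 1 i) := by
    rw [lp.coeFn_sum, Finset.sum_apply]
    refine Finset.sum_congr rfl fun j _ => ?_
    have hlinear : (F (α (j + 1)) - F (α j)) (x j) = x j • (F (α (j + 1)) - F (α j)) 1 := by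
      rw [← map_smul, smul_eq_mul, mul_one]
    rw [hlinear]
    rfl
  rw [hcoord, Real.norm_eq_abs]
  exact (abs_sum_mul_sub_le_of_antitoneOn (hF i) hα hx).trans
    ((le_abs_self _).trans_eq (abs_sub_comm _ _))

theorem ofReal_sum_norm_sub_le_evar {u : ℕ → ℝ} (hu : StrictAnti u) (hub : u 0 = b)
    (hua : ∀ n, a < u n) (G : ℝ → E) (N : ℕ) :
    ENNReal.ofReal (∑ i ∈ Finset.range N, ‖G (u i) - G (u (i + 1))‖) ≤ evar a b G := by
  let α : ℕ → ℝ
    | 0 => a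
    | j + 1 => u (N - j)
  have hα : IsDivision a b (N + 1) α := by
    refine ⟨rfl, by simp [α, hub], fun i hi => ?_⟩
    cases i with
    | zero => exact hua _
    | succ j => exact hu (by omega)
  refine le_iSup_of_le (N + 1) (le_iSup₂_of_le α hα (ENNReal.ofReal_le_ofReal ?_))
  rw [Finset.sum_range_succ', ← Finset.sum_range_reflect]
  refine le_add_of_le_of_nonneg (Finset.sum_le_sum fun j hj => ?_) (norm_nonneg _)
  have hjN : j < N := Finset.mem_range.1 hj
  rw [show N - 1 - j + 1 = N - j by omega, Nat.sub_sub, Nat.add_comm 1 j]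

theorem evar_eq_top_of_not_summable {u : ℕ → ℝ} (hu : StrictAnti u) (hub : u 0 = b)
    (hua : ∀ n, a < u n) {G : ℝ → E} (hG : ¬Summable fun i => ‖G (u i) - G (u (i + 1))‖) :
    evar a b G = ⊤ := by
  have hsum := (not_summable_iff_tendsto_nat_atTop_of_nonneg fun _ => norm_nonneg _).1 hG
  exact top_le_iff.1 (le_of_tendsto' (ENNReal.tendsto_ofReal_atTop.comp hsum)
    (ofReal_sum_norm_sub_le_evar hu hub hua G))

end General

theorem ySeq_eq_single (k : ℕ) : ySeq k = lp.single 2 k ((k : ℝ)⁻¹) := by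
  rw [ySeq, ← lp.single_smul, smul_eq_mul, mul_one]

theorem norm_ySeq (k : ℕ) : ‖ySeq k‖ = (k : ℝ)⁻¹ := by
  simp [ySeq_eq_single]

theorem memℓp_natCast_inv : Memℓp (fun k : ℕ => (k : ℝ)⁻¹) 2 :=
  memℓp_gen (by simp)

theorem Ssum_eq : Ssum = ⟨fun k : ℕ => (k : ℝ)⁻¹, memℓp_natCast_inv⟩ := by
  have hsum := lp.hasSum_single (p := 2) (by norm_num)
    (⟨fun k : ℕ => (k : ℝ)⁻¹, memℓp_natCast_inv⟩ : ellTwo)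
  simpa only [Ssum, ySeq_eq_single] using hsum.tsum_eq

theorem Ssum_apply (k : ℕ) : Ssum k = (k : ℝ)⁻¹ := by
  rw [Ssum_eq]

theorem norm_Ssum_sq : ‖Ssum‖ ^ 2 = Real.pi ^ 2 / 6 := by
  have hsum := lp.hasSum_norm (by norm_num) Ssum
  simp only [Ssum_apply, ENNReal.toReal_ofNat, Real.rpow_ofNat, norm_inv, Real.norm_natCast,
    inv_pow] at hsum
  exact hsum.unique (by simpa only [one_div] using hasSum_zeta_two)

theorem sum_ySeq_apply (s : Finset ℕ) (i : ℕ) :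
    (∑ k ∈ s, ySeq k) i = if i ∈ s then (i : ℝ)⁻¹ else 0 := by
  simp only [ySeq_eq_single, lp.coeFn_sum, Finset.sum_apply, lp.coeFn_single, Finset.sum_pi_single]

theorem norm_sum_ySeq_sq (s : Finset ℕ) :
    ‖∑ k ∈ s, ySeq k‖ ^ 2 = ∑ k ∈ s, ((k : ℝ) ^ 2)⁻¹ := by
  simpa [ySeq_eq_single] using
    lp.norm_sum_single (p := 2) (by norm_num) (fun k : ℕ => (k : ℝ)⁻¹) s

theorem norm_Ssum_sub_sum_ySeq_sq (s : Finset ℕ) :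
    ‖Ssum - ∑ k ∈ s, ySeq k‖ ^ 2 = Real.pi ^ 2 / 6 - ∑ k ∈ s, ((k : ℝ) ^ 2)⁻¹ := by
  simpa [ySeq_eq_single, Ssum_apply, norm_Ssum_sq] using
    lp.norm_compl_sum_single (p := 2) (by norm_num) Ssum s

/-- The step function `t ↦ F(t)1` of the example: the `n`-th partial sum of `S` on
`(1/(n+1), 1/n]` and `S` at `0`. Nothing is required of `v` outside `[0, 1]`. -/
structure IsStepSum (v : ℝ → ellTwo) : Prop where
  zero : v 0 = Ssum
  of_mem_Ioc : ∀ n : ℕ, 1 ≤ n → ∀ t ∈ Set.Ioc ((n + 1 : ℝ))⁻¹ ((n : ℝ))⁻¹,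
    v t = ∑ k ∈ Finset.Icc 1 n, ySeq k

namespace IsStepSum

section Values

variable {v : ℝ → ellTwo}

theorem inv_natCast (hv : IsStepSum v) {n : ℕ} (hn : 1 ≤ n) :
    v (n : ℝ)⁻¹ = ∑ k ∈ Finset.Icc 1 n, ySeq k :=
  have hn' : (0 : ℝ) < n := by exact_mod_cast hn
  hv.of_mem_Ioc n hn _ ⟨inv_strictAnti₀ hn' (lt_add_one _), le_rfl⟩

theorem sub_inv_natCast (hv : IsStepSum v) {m n : ℕ} (hm : 1 ≤ m) (hmn : m ≤ n) :
    v (n : ℝ)⁻¹ - v (m : ℝ)⁻¹ = ∑ k ∈ Finset.Ioc m n, ySeq k := by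
  rw [hv.inv_natCast hm, hv.inv_natCast (hm.trans hmn), sub_eq_iff_eq_add']
  -- `Finset.Icc 1 n` and `Finset.Ioc 0 n` are definitionally equal.
  exact (Finset.sum_Ioc_consecutive ySeq m.zero_le hmn).symm

theorem eq_sum_floor_inv (hv : IsStepSum v) {t : ℝ} (ht : t ∈ Set.Ioc 0 1) :
    v t = ∑ k ∈ Finset.Icc 1 ⌊t⁻¹⌋₊, ySeq k := by
  have hfloor : 1 ≤ ⌊t⁻¹⌋₊ := Nat.le_floor (by simpa using (one_le_inv₀ ht.1).2 ht.2)
  have hfloor' : (0 : ℝ) < ⌊t⁻¹⌋₊ := by exact_mod_cast hfloor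
  exact hv.of_mem_Ioc _ hfloor t ⟨inv_lt_of_inv_lt₀ ht.1 (Nat.lt_floor_add_one _),
    (le_inv_comm₀ hfloor' ht.1).1 (Nat.floor_le (inv_nonneg.2 ht.1.le))⟩

theorem apply_eq (hv : IsStepSum v) {t : ℝ} (ht : t ∈ Set.Icc 0 1) (k : ℕ) :
    v t k = if t * k ≤ 1 then (k : ℝ)⁻¹ else 0 := by
  rcases ht.1.eq_or_lt with rfl | ht0
  · simp [hv.zero, Ssum_apply]
  · have hmem : k ≤ ⌊t⁻¹⌋₊ ↔ t * k ≤ 1 := by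
      rw [Nat.le_floor_iff (inv_nonneg.2 ht.1), ← one_div, le_div_iff₀ ht0, mul_comm]
    rw [hv.eq_sum_floor_inv ⟨ht0, ht.2⟩, sum_ySeq_apply]
    rcases k.eq_zero_or_pos with rfl | hk
    · simp
    · simp [Finset.mem_Icc, hmem, Nat.one_le_iff_ne_zero, hk.ne']

theorem antitoneOn_apply (hv : IsStepSum v) (k : ℕ) :
    AntitoneOn (fun t => v t k) (Set.Icc 0 1) := by
  intro s hs t ht hst
  have hmul : s * k ≤ t * k := mul_le_mul_of_nonneg_right hst k.cast_nonneg
  simp only [hv.apply_eq hs, hv.apply_eq ht]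
  split_ifs with htk hsk hsk
  · exact le_rfl
  · exact absurd (hmul.trans htk) hsk
  · positivity
  · exact le_rfl

end Values

variable {F : ℝ → ℝ →L[ℝ] ellTwo}

theorem semivar_eq (hF : IsStepSum fun t => F t 1) {a b : ℝ} (ha : 0 ≤ a) (hab : a < b)
    (hb : b ≤ 1) : semivar a b F = ENNReal.ofReal ‖F b 1 - F a 1‖ :=
  semivar_eq_of_antitoneOn_apply hab fun k =>
    (hF.antitoneOn_apply k).mono (Set.Icc_subset_Icc ha hb)

theorem semivar_zero_inv_natCast (hF : IsStepSum fun t => F t 1) {n : ℕ} (hn : 1 ≤ n) :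
    semivar 0 (n : ℝ)⁻¹ F =
      ENNReal.ofReal √(Real.pi ^ 2 / 6 - ∑ k ∈ Finset.Icc 1 n, ((k : ℝ) ^ 2)⁻¹) := by
  have hn' : (1 : ℝ) ≤ n := by exact_mod_cast hn
  rw [hF.semivar_eq le_rfl (by positivity) (inv_le_one_of_one_le₀ hn'), hF.inv_natCast hn,
    hF.zero, norm_sub_rev, ← norm_Ssum_sub_sum_ySeq_sq, Real.sqrt_sq (norm_nonneg _)]

theorem semivar_inv_natCast_inv_natCast (hF : IsStepSum fun t => F t 1) {m n : ℕ} (hm : 1 ≤ m)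
    (hmn : m < n) :
    semivar (n : ℝ)⁻¹ (m : ℝ)⁻¹ F =
      ENNReal.ofReal √(∑ k ∈ Finset.Ioc m n, ((k : ℝ) ^ 2)⁻¹) := by
  have hm' : (1 : ℝ) ≤ m := by exact_mod_cast hm
  have hmn' : (m : ℝ) < n := by exact_mod_cast hmn
  rw [hF.semivar_eq (by positivity) (inv_strictAnti₀ (by positivity) hmn')
    (inv_le_one_of_one_le₀ hm'), norm_sub_rev, hF.sub_inv_natCast hm hmn.le,
    ← norm_sum_ySeq_sq, Real.sqrt_sq (norm_nonneg _)]

theorem semivar_zero_one (hF : IsStepSum fun t => F t 1) :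
    semivar 0 1 F = ENNReal.ofReal √(Real.pi ^ 2 / 6 - 1) := by
  simpa using hF.semivar_zero_inv_natCast le_rfl

theorem semivar_zero_half (hF : IsStepSum fun t => F t 1) :
    semivar 0 (1 / 2) F = ENNReal.ofReal √(Real.pi ^ 2 / 6 - 5 / 4) := by
  have hsum : ∑ k ∈ Finset.Icc (1 : ℕ) 2, ((k : ℝ) ^ 2)⁻¹ = 5 / 4 := by
    norm_num [Finset.sum_Icc_succ_top]
  simpa [hsum] using hF.semivar_zero_inv_natCast one_le_two

theorem semivar_half_one (hF : IsStepSum fun t => F t 1) :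
    semivar (1 / 2) 1 F = ENNReal.ofReal (1 / 2) := by
  have hsqrt : √(∑ k ∈ Finset.Ioc (1 : ℕ) 2, ((k : ℝ) ^ 2)⁻¹) = 1 / 2 := by
    simp [show Finset.Ioc 1 2 = {2} from rfl]
  simpa only [hsqrt, Nat.cast_ofNat, Nat.cast_one, inv_one, one_div] using
    hF.semivar_inv_natCast_inv_natCast le_rfl one_lt_two

theorem evar_zero_one (hF : IsStepSum fun t => F t 1) : evar 0 1 F = ⊤ := by
  let u : ℕ → ℝ := fun n => ((n + 1 : ℕ) : ℝ)⁻¹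
  have hu : StrictAnti u := fun m n hmn =>
    inv_strictAnti₀ (by positivity) (by exact_mod_cast Nat.succ_lt_succ hmn)
  have hjump (i : ℕ) : ((i + 2 : ℕ) : ℝ)⁻¹ ≤ ‖F (u i) - F (u (i + 1))‖ := by
    rw [norm_sub_rev, ← norm_ySeq, ← Finset.sum_singleton ySeq, ← Nat.Ioc_succ_singleton,
      ← hF.sub_inv_natCast (by omega) (by omega)]
    exact (F (u (i + 1)) - F (u i)).unit_le_opNorm 1 norm_one.le
  refine evar_eq_top_of_not_summable hu (by simp [u]) (fun n => by positivity) fun hsum => ?_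
  exact Real.not_summable_natCast_inv ((summable_nat_add_iff 2).1
    (hsum.of_nonneg_of_le (fun i => by positivity) hjump))

end IsStepSum

theorem sqrt_add_sq_lt_sqrt_add {x y : ℝ} (hx : 0 < x) (hy : 0 < y) : √(x + y ^ 2) < √x + y := by
  rw [Real.sqrt_lt' (by positivity), add_sq, Real.sq_sqrt hx.le]
  linarith [mul_pos (Real.sqrt_pos.2 hx) hy]

/-- the function `F : [0,1] → L(ℝ,ℓ²)` with `F(t)x = x • ∑_{k=1}^n y k` for
`t ∈ (1/(n+1), 1/n]` and `F(0)x = x • S` satisfies `SV_0^1(F) = √(π²/6 − 1)`,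
`SV_0^{1/2}(F) = √(π²/6 − 5/4)`, `SV_{1/2}^1(F) = 1/2`, hence
`SV_0^1(F) < SV_0^{1/2}(F) + SV_{1/2}^1(F)`; moreover `var_0^1(F) = ∞`. -/
theorem semivar_ellTwo_example
    (F : ℝ → ℝ →L[ℝ] ellTwo)
    (hF0 : ∀ x : ℝ, F 0 x = x • Ssum)
    (hFn : ∀ n : ℕ, 1 ≤ n → ∀ t ∈ Set.Ioc ((n + 1 : ℝ))⁻¹ ((n : ℝ))⁻¹, ∀ x : ℝ,
      F t x = x • ∑ k ∈ Finset.Icc 1 n, ySeq k) :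
    semivar 0 1 F = ENNReal.ofReal (Real.sqrt (Real.pi ^ 2 / 6 - 1)) ∧
    semivar 0 (1 / 2) F = ENNReal.ofReal (Real.sqrt (Real.pi ^ 2 / 6 - 5 / 4)) ∧
    semivar (1 / 2) 1 F = ENNReal.ofReal (1 / 2) ∧
    semivar 0 1 F < semivar 0 (1 / 2) F + semivar (1 / 2) 1 F ∧
    evar 0 1 F = ⊤ := by
  have hF : IsStepSum fun t => F t 1 :=
    ⟨by simpa using hF0 1, fun n hn t ht => by simpa using hFn n hn t ht 1⟩
  refine ⟨hF.semivar_zero_one, hF.semivar_zero_half, hF.semivar_half_one, ?_, hF.evar_zero_one⟩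
  have hpos : 0 < Real.pi ^ 2 / 6 - 5 / 4 := by nlinarith [Real.pi_gt_three]
  have hlt : √(Real.pi ^ 2 / 6 - 1) < √(Real.pi ^ 2 / 6 - 5 / 4) + 1 / 2 := by
    rw [show Real.pi ^ 2 / 6 - 1 = Real.pi ^ 2 / 6 - 5 / 4 + (1 / 2) ^ 2 by ring]
    exact sqrt_add_sq_lt_sqrt_add hpos one_half_pos
  rw [hF.semivar_zero_one, hF.semivar_zero_half, hF.semivar_half_one,
    ← ENNReal.ofReal_add (Real.sqrt_nonneg _) one_half_pos.le]
  exact (ENNReal.ofReal_lt_ofReal_iff (by positivity)).2 hlt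
end

section
/- Let X be a nonzero real Banach space and Y a real Banach space. The following are equivalent: (i) Y is finite-dimensional; (ii) every function F : [a,b] → L(X,Y) of bounded semivariation on [a,b] is of bounded variation on [a,b]. -/
open Filter Topology

/-! The nontrivial direction is a Dvoretzky–Rogers argument. Fix an injective linear map from a
Euclidean space `H` of dimension `2m` into the infinite-dimensional space `Y` and precompose it with
an endomorphism of maximal determinant among those for which the composite has norm at most `1`.
If the resulting `w` had norm at most `1/4` on the orthogonal complement of a subspace of dimension
less than `m`, with orthogonal projection `P` onto that complement, then `w ∘ (1 + P)` would have
norm at most `5/4`, while `det (1 + P) = 2 ^ rank P` exceeds `(5/4) ^ (2m)`. So `H` contains `m`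
orthonormal vectors whose images under `w` have norm at least `1/4`, while every combination of
these images with coefficients in `[-1, 1]` has norm at most `√m`. Rescaled and glued for
`m = 4 ^ p`, these images give a sequence in `Y` that is weakly, but not absolutely, summable.
A function taking the terms of the sequence as isolated values, and `0` elsewhere, has bounded
semivariation and unbounded variation.

Conversely, in a finite-dimensional space the absolute sum of a family is controlled through
finitely many coordinate functionals by its weak `ℓ¹` norm, which for the increments of `F` is at
most the semivariation. -/

open Module ENNReal

universe u v

section WeakL1

variable {ι κ Y Z : Type*} [NormedAddCommGroup Y] [NormedSpace ℝ Y]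
  [NormedAddCommGroup Z] [NormedSpace ℝ Z]

/-- The weak `ℓ¹` norm of a family `y` in a real normed space, i.e. the supremum of
`∑ i, |φ (y i)|` over the functionals `φ` of norm at most `1`. It measures the size of the sums
`∑ i, c i • y i` with `|c i| ≤ 1`, and takes the value `⊤` on families that are not weakly
summable. -/
noncomputable def weakL1Norm (y : ι → Y) : ℝ≥0∞ :=
  ⨆ (φ : StrongDual ℝ Y) (_ : ‖φ‖ ≤ 1), ∑' i, ‖φ (y i)‖ₑ

theorem tsum_enorm_apply_le_weakL1Norm {φ : StrongDual ℝ Y} (hφ : ‖φ‖ ≤ 1) (y : ι → Y) :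
    ∑' i, ‖φ (y i)‖ₑ ≤ weakL1Norm y :=
  le_iSup₂ (f := fun (φ : StrongDual ℝ Y) (_ : ‖φ‖ ≤ 1) => ∑' i, ‖φ (y i)‖ₑ) φ hφ

theorem tsum_enorm_apply_le_enorm_mul_weakL1Norm (φ : StrongDual ℝ Y) (y : ι → Y) :
    ∑' i, ‖φ (y i)‖ₑ ≤ ‖φ‖ₑ * weakL1Norm y := by
  rcases eq_or_ne φ 0 with rfl | hφ
  · simp
  have hunit : ‖‖φ‖⁻¹ • φ‖ ≤ 1 := (norm_smul_inv_norm (𝕜 := ℝ) hφ).le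
  calc ∑' i, ‖φ (y i)‖ₑ = ∑' i, ‖φ‖ₑ * ‖(‖φ‖⁻¹ • φ) (y i)‖ₑ := by
        refine tsum_congr fun i => ?_
        rw [← enorm_norm φ, ← enorm_mul, smul_apply, smul_eq_mul,
          mul_inv_cancel_left₀ (norm_ne_zero_iff.2 hφ)]
    _ = ‖φ‖ₑ * ∑' i, ‖(‖φ‖⁻¹ • φ) (y i)‖ₑ := ENNReal.tsum_mul_left
    _ ≤ ‖φ‖ₑ * weakL1Norm y := by
        gcongr
        exact tsum_enorm_apply_le_weakL1Norm hunit y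

theorem enorm_sum_smul_le_weakL1Norm [Fintype ι] (y : ι → Y) {c : ι → ℝ} (hc : ∀ i, ‖c i‖ ≤ 1) :
    ‖∑ i, c i • y i‖ₑ ≤ weakL1Norm y := by
  obtain ⟨φ, hφ, hφ_sum⟩ := exists_dual_vector'' ℝ (∑ i, c i • y i)
  calc ‖∑ i, c i • y i‖ₑ = ‖φ (∑ i, c i • y i)‖ₑ := by rw [hφ_sum]; simp
    _ = ‖∑ i, c i * φ (y i)‖ₑ := by simp only [map_sum, map_smul, smul_eq_mul]
    _ ≤ ∑ i, ‖c i * φ (y i)‖ₑ := enorm_sum_le _ _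
    _ ≤ ∑ i, ‖φ (y i)‖ₑ := by
        refine Finset.sum_le_sum fun i _ => enorm_le_iff_norm_le.2 ?_
        rw [norm_mul]
        exact mul_le_of_le_one_left (norm_nonneg _) (hc i)
    _ ≤ weakL1Norm y := by
        rw [← tsum_fintype (L := .unconditional ι)]
        exact tsum_enorm_apply_le_weakL1Norm hφ y

theorem weakL1Norm_le_of_forall_enorm_sum_smul_le [Fintype ι] {y : ι → Y} {C : ℝ≥0∞}
    (h : ∀ c : ι → ℝ, (∀ i, ‖c i‖ ≤ 1) → ‖∑ i, c i • y i‖ₑ ≤ C) : weakL1Norm y ≤ C := by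
  refine iSup₂_le fun φ hφ => ?_
  let ε : ι → ℝ := fun i => SignType.sign (φ (y i))
  have hε : ∀ i, ‖ε i‖ ≤ 1 := fun i => by
    cases h : SignType.sign (φ (y i)) <;> simp [ε, h]
  have hsum : φ (∑ i, ε i • y i) = ∑ i, ‖φ (y i)‖ := by
    simp only [map_sum, map_smul, smul_eq_mul, ε, sign_mul_self, Real.norm_eq_abs]
  calc ∑' i, ‖φ (y i)‖ₑ = ‖φ (∑ i, ε i • y i)‖ₑ := by
        rw [hsum, Real.enorm_of_nonneg (Finset.sum_nonneg fun i _ => norm_nonneg _),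
          ENNReal.ofReal_sum_of_nonneg fun i _ => norm_nonneg _, tsum_fintype]
        simp only [ofReal_norm]
    _ ≤ ‖∑ i, ε i • y i‖ₑ := enorm_le_iff_norm_le.2 ((φ.le_of_opNorm_le hφ _).trans_eq (one_mul _))
    _ ≤ C := h ε hε

theorem weakL1Norm_map_le (w : Y →L[ℝ] Z) (y : ι → Y) :
    weakL1Norm (fun i => w (y i)) ≤ ‖w‖ₑ * weakL1Norm y := by
  refine iSup₂_le fun φ hφ => ?_
  have hnorm : ‖φ ∘L w‖ ≤ ‖w‖ :=
    (φ.opNorm_comp_le w).trans (mul_le_of_le_one_left (norm_nonneg w) hφ)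
  calc ∑' i, ‖φ (w (y i))‖ₑ ≤ ‖φ ∘L w‖ₑ * weakL1Norm y :=
        tsum_enorm_apply_le_enorm_mul_weakL1Norm (φ ∘L w) y
    _ ≤ ‖w‖ₑ * weakL1Norm y := mul_le_mul_left (enorm_le_iff_norm_le.2 hnorm) _

theorem weakL1Norm_const_smul_le (c : ℝ) (y : ι → Y) :
    weakL1Norm (fun i => c • y i) ≤ ‖c‖ₑ * weakL1Norm y :=
  (weakL1Norm_map_le (c • ContinuousLinearMap.id ℝ Y) y).trans <|
    mul_le_mul_left (enorm_le_iff_norm_le.2 <| by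
      rw [norm_smul]
      exact mul_le_of_le_one_right (norm_nonneg c) ContinuousLinearMap.norm_id_le) _

theorem weakL1Norm_comp_le {σ : κ → ι} (hσ : Function.Injective σ) (y : ι → Y) :
    weakL1Norm (y ∘ σ) ≤ weakL1Norm y :=
  iSup₂_mono fun φ _ => ENNReal.tsum_comp_le_tsum_of_injective hσ fun i => ‖φ (y i)‖ₑ

theorem weakL1Norm_extend_zero {σ : κ → ι} (hσ : Function.Injective σ) (y : κ → Y) :
    weakL1Norm (Function.extend σ y 0) = weakL1Norm y := by
  have hφ (φ : StrongDual ℝ Y) : ∑' i, ‖φ (Function.extend σ y 0 i)‖ₑ = ∑' k, ‖φ (y k)‖ₑ := by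
    have hzero : (fun z => ‖φ z‖ₑ) ∘ (0 : ι → Y) = 0 := by ext; simp
    rw [← tsum_extend_zero hσ, ← hzero]
    exact tsum_congr fun i => Function.apply_extend (fun z => ‖φ z‖ₑ) σ 0 i
  simp only [weakL1Norm, hφ]

theorem weakL1Norm_sigma_le {β : ι → Type*} (y : ∀ i, β i → Y) :
    weakL1Norm (fun x : Σ i, β i => y x.1 x.2) ≤ ∑' i, weakL1Norm (y i) :=
  iSup₂_le fun φ hφ => by
    rw [ENNReal.tsum_sigma fun i b => ‖φ (y i b)‖ₑ]
    exact ENNReal.tsum_le_tsum fun i => tsum_enorm_apply_le_weakL1Norm hφ (y i)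

theorem weakL1Norm_le_of_orthonormal {H : Type*} [NormedAddCommGroup H] [InnerProductSpace ℝ H]
    [Fintype ι] {v : ι → H} (hv : Orthonormal ℝ v) :
    weakL1Norm v ≤ ENNReal.ofReal √(Fintype.card ι) := by
  refine weakL1Norm_le_of_forall_enorm_sum_smul_le fun c hc => ?_
  rw [← ofReal_norm]
  refine ENNReal.ofReal_le_ofReal (Real.le_sqrt_of_sq_le ?_)
  calc ‖∑ i, c i • v i‖ ^ 2 = ∑ i, ‖c i‖ ^ 2 := by
        rw [← real_inner_self_eq_norm_sq, hv.inner_sum]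
        simp [sq]
    _ ≤ ∑ _i : ι, 1 := Finset.sum_le_sum fun i _ => pow_le_one₀ (norm_nonneg _) (hc i)
    _ = Fintype.card ι := by simp

theorem exists_forall_tsum_enorm_le_mul_weakL1Norm (Y : Type*) [NormedAddCommGroup Y]
    [NormedSpace ℝ Y] [FiniteDimensional ℝ Y] :
    ∃ K : NNReal, ∀ {ι : Type u} (y : ι → Y), ∑' i, ‖y i‖ₑ ≤ K * weakL1Norm y := by
  let B := finBasis ℝ Y
  let φ : Fin (finrank ℝ Y) → StrongDual ℝ Y := fun k => LinearMap.toContinuousLinearMap (B.coord k)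
  have enorm_le_coord : ∀ z, ‖z‖ₑ ≤ ∑ k, ‖φ k z‖ₑ * ‖B k‖ₑ := fun z => by
    conv_lhs => rw [← B.sum_repr z]
    refine (enorm_sum_le _ _).trans_eq (Finset.sum_congr rfl fun k _ => ?_)
    exact enorm_smul _ _
  refine ⟨∑ k, ‖φ k‖₊ * ‖B k‖₊, fun {ι} y => ?_⟩
  calc ∑' i, ‖y i‖ₑ ≤ ∑' i, ∑ k, ‖φ k (y i)‖ₑ * ‖B k‖ₑ :=
        ENNReal.tsum_le_tsum fun i => enorm_le_coord (y i)
    _ = ∑ k, (∑' i, ‖φ k (y i)‖ₑ) * ‖B k‖ₑ := by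
        rw [Summable.tsum_finsetSum fun _ _ => ENNReal.summable]
        simp only [ENNReal.tsum_mul_right]
    _ ≤ ∑ k, ‖φ k‖ₑ * weakL1Norm y * ‖B k‖ₑ := by
        gcongr with k
        exact tsum_enorm_apply_le_enorm_mul_weakL1Norm (φ k) y
    _ = ↑(∑ k, ‖φ k‖₊ * ‖B k‖₊) * weakL1Norm y := by
        push_cast
        rw [Finset.sum_mul]
        exact Finset.sum_congr rfl fun k _ => mul_right_comm _ _ _

end WeakL1

section DvoretzkyRogers

theorem det_one_add_of_isProj {K V : Type*} [Field K] [AddCommGroup V] [Module K V]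
    [FiniteDimensional K V] {U : Submodule K V} {P : V →ₗ[K] V} (hP : LinearMap.IsProj U P) :
    (1 + P).det = 2 ^ finrank K U := by
  let e := U.prodEquivOfIsCompl P.ker hP.isCompl
  have hconj : 1 + P = e.conj (((2 : K) • LinearMap.id).prodMap LinearMap.id) := by
    have hid : 1 = e.conj LinearMap.id := (LinearEquiv.conj_id e).symm
    have hP_conj : P = e.conj (LinearMap.id.prodMap 0) := hP.eq_conj_prodMap
    have hsum : LinearMap.id + LinearMap.id.prodMap 0 =
        ((2 : K) • (LinearMap.id : U →ₗ[K] U)).prodMap (LinearMap.id : P.ker →ₗ[K] P.ker) := by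
      ext <;> simp [two_smul]
    calc 1 + P = e.conj LinearMap.id + e.conj (LinearMap.id.prodMap 0) :=
          congrArg₂ (· + ·) hid hP_conj
      _ = e.conj (((2 : K) • LinearMap.id).prodMap LinearMap.id) := by rw [← map_add, hsum]
  rw [hconj, LinearEquiv.conj_apply, LinearMap.comp_assoc, LinearMap.det_conj,
    LinearMap.det_prodMap, LinearMap.det_smul, LinearMap.det_id, LinearMap.det_id, mul_one, mul_one]

theorem exists_orthonormal_forall_of_forall_finrank_lt {𝕜 H : Type*} [RCLike 𝕜]
    [NormedAddCommGroup H] [InnerProductSpace 𝕜 H] {p : H → Prop} {m : ℕ}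
    (h : ∀ V : Submodule 𝕜 H, FiniteDimensional 𝕜 V → finrank 𝕜 V < m →
      ∃ x ∈ Vᗮ, ‖x‖ = 1 ∧ p x) :
    ∃ v : Fin m → H, Orthonormal 𝕜 v ∧ ∀ i, p (v i) := by
  induction m with
  | zero => exact ⟨Fin.elim0, .of_isEmpty _, fun i => i.elim0⟩
  | succ m ih =>
    obtain ⟨v, hv, hpv⟩ := ih fun V hV hVm => h V hV (hVm.trans m.lt_succ_self)
    obtain ⟨x, hx, hx_norm, hpx⟩ := h (.span 𝕜 (Set.range v))
      (FiniteDimensional.span_of_finite 𝕜 (Set.finite_range v)) <|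
      (finrank_range_le_card v).trans_lt (by simp)
    refine ⟨Matrix.vecCons x v, orthonormal_vecCons_iff.2 ⟨hx_norm, fun i => ?_, hv⟩,
      Fin.cases hpx hpv⟩
    exact Submodule.inner_left_of_mem_orthogonal (Submodule.subset_span (Set.mem_range_self i)) hx

variable {H Y : Type*} [NormedAddCommGroup Y] [NormedSpace ℝ Y]

/-- `w` has norm at most `1` and no endomorphism `T` with `‖w ∘ T‖ ≤ 1` has determinant greater
than `1` in absolute value, i.e. (for injective `w`) the image of the unit ball is the ellipsoid of
maximal volume, the John ellipsoid, in the unit ball of `range w`. The condition on `T` is stated in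
homogeneous form. -/
structure IsJohnMap [NormedAddCommGroup H] [NormedSpace ℝ H] (w : H →L[ℝ] Y) : Prop where
  norm_le_one : ‖w‖ ≤ 1
  abs_det_le (T : H →L[ℝ] H) : |T.det| ≤ ‖w ∘L T‖ ^ finrank ℝ H

theorem det_const_smul [NormedAddCommGroup H] [NormedSpace ℝ H] (c : ℝ)
    (T : H →L[ℝ] H) : (c • T).det = c ^ finrank ℝ H * T.det :=
  LinearMap.det_smul c (T : H →ₗ[ℝ] H)

theorem exists_norm_comp_le_one_forall_abs_det_le [NormedAddCommGroup H] [NormedSpace ℝ H]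
    [FiniteDimensional ℝ H] {j : H →L[ℝ] Y} (hj : Function.Injective j) :
    ∃ u : H →L[ℝ] H, ‖j ∘L u‖ ≤ 1 ∧
      ∀ v : H →L[ℝ] H, |v.det| ≤ ‖j ∘L v‖ ^ finrank ℝ H * |u.det| := by
  let Φ : (H →L[ℝ] H) →L[ℝ] (H →L[ℝ] Y) := ContinuousLinearMap.compL ℝ H H Y j
  have hΦ_ker : LinearMap.ker (Φ : (H →L[ℝ] H) →ₗ[ℝ] (H →L[ℝ] Y)) = ⊥ :=
    LinearMap.ker_eq_bot.2 fun u v huv =>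
      ContinuousLinearMap.ext fun x => hj (DFunLike.congr_fun huv x)
  obtain ⟨K, -, hK⟩ := LinearMap.exists_antilipschitzWith _ hΦ_ker
  have hcompact : IsCompact (Φ ⁻¹' Metric.closedBall 0 1) := by
    have : ProperSpace (H →L[ℝ] H) := FiniteDimensional.proper ℝ _
    exact Metric.isCompact_of_isClosed_isBounded (Metric.isClosed_closedBall.preimage Φ.continuous)
      (hK.isBounded_preimage Metric.isBounded_closedBall)
  obtain ⟨u, hu, hmax⟩ := hcompact.exists_isMaxOn ⟨0, by simp⟩
    ContinuousLinearMap.continuous_det.abs.continuousOn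
  refine ⟨u, mem_closedBall_zero_iff.1 hu, fun v => ?_⟩
  rcases (norm_nonneg (Φ v)).eq_or_lt with hv | hv
  · have hv0 : v = 0 := by
      simpa using LinearMap.ker_eq_bot'.1 hΦ_ker v (norm_eq_zero.1 hv.symm)
    subst hv0
    rcases eq_or_ne (finrank ℝ H) 0 with hH | hH
    · simp only [ContinuousLinearMap.det, LinearMap.det_eq_one_of_finrank_eq_zero hH, hH, pow_zero,
        one_mul, le_refl]
    · have hdet : (0 : H →L[ℝ] H).det = 0 := by
        rw [← zero_smul ℝ (0 : H →L[ℝ] H), det_const_smul, zero_pow hH, zero_mul]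
      rw [hdet, abs_zero]
      positivity
  · have hscaled : ‖Φ v‖⁻¹ • v ∈ Φ ⁻¹' Metric.closedBall 0 1 := by
      rw [Set.mem_preimage, mem_closedBall_zero_iff, map_smul, norm_smul, norm_inv, norm_norm,
        inv_mul_cancel₀ hv.ne']
    have hdet : |(‖Φ v‖⁻¹ • v).det| ≤ |u.det| := hmax hscaled
    rwa [det_const_smul, abs_mul, inv_pow, abs_of_pos (by positivity),
      inv_mul_le_iff₀ (by positivity)] at hdet

theorem exists_isJohnMap [NormedAddCommGroup H] [NormedSpace ℝ H] [FiniteDimensional ℝ H]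
    {j : H →L[ℝ] Y} (hj : Function.Injective j) : ∃ w : H →L[ℝ] Y, IsJohnMap w := by
  obtain ⟨u, hu, hmax⟩ := exists_norm_comp_le_one_forall_abs_det_le hj
  have hdet_ne : |u.det| ≠ 0 := fun h =>
    one_pos.not_ge (by simpa [h, ContinuousLinearMap.det] using hmax (.id ℝ H))
  refine ⟨j ∘L u, hu, fun T => ?_⟩
  have hdet_comp : (u ∘L T).det = u.det * T.det := LinearMap.det_comp _ _
  have hle := hmax (u ∘L T)
  rw [hdet_comp, abs_mul, mul_comm] at hle
  exact le_of_mul_le_mul_right hle ((abs_nonneg _).lt_of_ne' hdet_ne)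

theorem IsJohnMap.exists_mem_orthogonal [NormedAddCommGroup H] [InnerProductSpace ℝ H]
    [FiniteDimensional ℝ H] {w : H →L[ℝ] Y} (hw : IsJohnMap w) (V : Submodule ℝ H)
    (hV : 2 * finrank ℝ V < finrank ℝ H) : ∃ x ∈ Vᗮ, ‖x‖ = 1 ∧ 1 / 4 ≤ ‖w x‖ := by
  by_contra! hsmall
  let P := Vᗮ.starProjection
  have hwP : ‖w ∘L P‖ ≤ 1 / 4 := by
    have hrestrict : ‖w ∘L Vᗮ.subtypeL‖ ≤ 1 / 4 :=
      ContinuousLinearMap.opNorm_le_of_unit_norm (by norm_num) fun x hx => (hsmall x x.2 hx).le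
    calc ‖w ∘L P‖ = ‖(w ∘L Vᗮ.subtypeL) ∘L Vᗮ.orthogonalProjectionOnto‖ := rfl
      _ ≤ 1 / 4 * 1 := (ContinuousLinearMap.opNorm_comp_le _ _).trans <|
          mul_le_mul hrestrict Vᗮ.orthogonalProjectionOnto_norm_le (norm_nonneg _) (by norm_num)
      _ = 1 / 4 := mul_one _
  have hnorm : ‖w ∘L (1 + P)‖ ≤ 5 / 4 := by
    rw [ContinuousLinearMap.comp_add]
    exact (norm_add_le_of_le hw.norm_le_one hwP).trans_eq (by norm_num)
  have hdet : (1 + P).det = 2 ^ finrank ℝ Vᗮ :=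
    det_one_add_of_isProj (P := (P : H →ₗ[ℝ] H))
      ⟨fun x => Vᗮ.starProjection_apply_mem x, fun x hx => Vᗮ.starProjection_eq_self_iff.2 hx⟩
  have hrank := V.finrank_add_finrank_orthogonal
  have hlt : |(1 + P).det| < 2 ^ finrank ℝ Vᗮ :=
    calc |(1 + P).det| ≤ (5 / 4) ^ finrank ℝ H := (hw.abs_det_le _).trans (by gcongr)
      _ ≤ (5 / 4) ^ (2 * finrank ℝ Vᗮ) := pow_le_pow_right₀ (by norm_num) (by lia)
      _ = ((5 / 4) ^ 2) ^ finrank ℝ Vᗮ := pow_mul _ _ _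
      _ < 2 ^ finrank ℝ Vᗮ := pow_lt_pow_left₀ (by norm_num) (by norm_num) (by lia)
  rw [hdet, abs_of_pos (by positivity)] at hlt
  exact hlt.false

theorem exists_continuousLinearMap_injective (H : Type u) {Y : Type v} [NormedAddCommGroup H]
    [NormedSpace ℝ H] [FiniteDimensional ℝ H] [NormedAddCommGroup Y] [NormedSpace ℝ Y]
    (hY : ¬ FiniteDimensional ℝ Y) : ∃ j : H →L[ℝ] Y, Function.Injective j := by
  have hrank : Cardinal.lift.{v} (Module.rank ℝ H) ≤ Cardinal.lift.{u} (Module.rank ℝ Y) :=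
    (Cardinal.lift_lt_aleph0.2 (Module.rank_lt_aleph0 ℝ H)).le.trans <|
      Cardinal.aleph0_le_lift.2 (not_lt.1 fun h => hY (Module.rank_lt_aleph0_iff.1 h))
  obtain ⟨j, hj⟩ := lift_rank_le_iff_exists_linearMap.1 hrank
  exact ⟨j.toContinuousLinearMap, hj⟩

theorem exists_fin_weakL1Norm_le_sqrt (hY : ¬ FiniteDimensional ℝ Y) (m : ℕ) :
    ∃ y : Fin m → Y, weakL1Norm y ≤ ENNReal.ofReal √m ∧ ∀ i, 1 / 4 ≤ ‖y i‖ := by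
  obtain ⟨j, hj⟩ := exists_continuousLinearMap_injective (EuclideanSpace ℝ (Fin (2 * m))) hY
  obtain ⟨w, hw⟩ := exists_isJohnMap hj
  obtain ⟨v, hv, hwv⟩ := exists_orthonormal_forall_of_forall_finrank_lt (m := m)
    fun V _ hV => hw.exists_mem_orthogonal V (by simpa using hV)
  refine ⟨fun i => w (v i), ?_, hwv⟩
  calc weakL1Norm (fun i => w (v i)) ≤ ‖w‖ₑ * weakL1Norm v := weakL1Norm_map_le w v
    _ ≤ 1 * ENNReal.ofReal √m := by
        gcongr
        · rw [← ofReal_norm]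
          exact ENNReal.ofReal_le_one.2 hw.norm_le_one
        · simpa using weakL1Norm_le_of_orthonormal hv
    _ = ENNReal.ofReal √m := one_mul _

theorem exists_fin_weakL1Norm_le_geometric (hY : ¬ FiniteDimensional ℝ Y) (p : ℕ) :
    ∃ y : Fin (4 ^ p) → Y, weakL1Norm y ≤ ENNReal.ofReal ((1 / 2) ^ p) ∧
      ENNReal.ofReal (1 / 4) ≤ ∑' i, ‖y i‖ₑ := by
  obtain ⟨y, hy_weak, hy_norm⟩ := exists_fin_weakL1Norm_le_sqrt hY (4 ^ p)
  refine ⟨fun i => ((4 : ℝ) ^ p)⁻¹ • y i, ?_, ?_⟩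
  · have hsqrt : √((4 ^ p : ℕ) : ℝ) = 2 ^ p := by
      rw [Real.sqrt_eq_iff_mul_self_eq (by positivity) (by positivity), ← mul_pow]
      norm_num
    calc weakL1Norm (fun i => ((4 : ℝ) ^ p)⁻¹ • y i)
        ≤ ‖((4 : ℝ) ^ p)⁻¹‖ₑ * ENNReal.ofReal (2 ^ p) := by
          grw [weakL1Norm_const_smul_le, hy_weak, hsqrt]
      _ = ENNReal.ofReal ((1 / 2) ^ p) := by
          rw [Real.enorm_of_nonneg (by positivity), ← ENNReal.ofReal_mul (by positivity),
            ← inv_pow, ← mul_pow]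
          norm_num
  · calc ENNReal.ofReal (1 / 4)
        = ∑ _i : Fin (4 ^ p), ENNReal.ofReal (((4 : ℝ) ^ p)⁻¹ * (1 / 4)) := by
          rw [← ENNReal.ofReal_sum_of_nonneg fun _ _ => by positivity]
          simp
      _ ≤ ∑' i, ‖((4 : ℝ) ^ p)⁻¹ • y i‖ₑ := by
          rw [tsum_fintype]
          refine Finset.sum_le_sum fun i _ => ?_
          rw [← ofReal_norm, norm_smul, Real.norm_of_nonneg (by positivity)]
          gcongr
          exact hy_norm i

theorem exists_weakL1Norm_lt_top_tsum_enorm_eq_top (hY : ¬ FiniteDimensional ℝ Y) :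
    ∃ y : ℕ → Y, weakL1Norm y < ⊤ ∧ ∑' i, ‖y i‖ₑ = ⊤ := by
  choose y hy_weak hy_norm using exists_fin_weakL1Norm_le_geometric hY
  let z : (Σ p : ℕ, Fin (4 ^ p)) → Y := fun x => y x.1 x.2
  have hz_weak : weakL1Norm z < ⊤ :=
    calc weakL1Norm z ≤ ∑' p, ENNReal.ofReal ((1 / 2) ^ p) :=
          (weakL1Norm_sigma_le y).trans (ENNReal.tsum_le_tsum hy_weak)
      _ < ⊤ := summable_geometric_two.tsum_ofReal_lt_top
  have hz_norm : ∑' x, ‖z x‖ₑ = ⊤ := by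
    refine top_unique ?_
    calc ⊤ = ∑' _p : ℕ, ENNReal.ofReal (1 / 4) :=
          (ENNReal.tsum_const_eq_top_of_ne_zero (by simp)).symm
      _ ≤ ∑' p, ∑' i, ‖y p i‖ₑ := ENNReal.tsum_le_tsum hy_norm
      _ = ∑' x, ‖z x‖ₑ := (ENNReal.tsum_sigma fun p i => ‖y p i‖ₑ).symm
  have : Infinite (Σ p : ℕ, Fin (4 ^ p)) :=
    .of_injective (fun p => ⟨p, ⟨0, by positivity⟩⟩) fun _ _ h => congrArg Sigma.fst h
  obtain ⟨e⟩ := nonempty_equiv_of_countable (α := ℕ) (β := Σ p : ℕ, Fin (4 ^ p))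
  exact ⟨z ∘ e, (weakL1Norm_comp_le e.injective z).trans_lt hz_weak,
    (e.tsum_eq fun x => ‖z x‖ₑ).trans hz_norm⟩

end DvoretzkyRogers

section Variation

variable {X Y E : Type*} [NormedAddCommGroup X] [NormedSpace ℝ X]
  [NormedAddCommGroup Y] [NormedSpace ℝ Y] [NormedAddCommGroup E] {a b : ℝ}

theorem IsDivision.strictMonoOn {n : ℕ} {α : ℕ → ℝ} (hα : IsDivision a b n α) :
    StrictMonoOn α (Set.Iic n) :=
  strictMonoOn_Iic_of_lt_succ hα.2.2

theorem IsDivision.enorm_sum_le_semivar {n : ℕ} {α : ℕ → ℝ} (hα : IsDivision a b n α)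
    (F : ℝ → X →L[ℝ] Y) {x : ℕ → X} (hx : ∀ j, ‖x j‖ ≤ 1) :
    ‖∑ j ∈ Finset.range n, (F (α (j + 1)) - F (α j)) (x j)‖ₑ ≤ semivar a b F := by
  rw [← ofReal_norm]
  exact le_iSup_of_le n <| le_iSup_of_le α <| le_iSup_of_le hα <| le_iSup₂_of_le x hx le_rfl

theorem IsDivision.weakL1Norm_le_semivar {n : ℕ} {α : ℕ → ℝ} (hα : IsDivision a b n α)
    (F : ℝ → X →L[ℝ] Y) {x : ℕ → X} (hx : ∀ j, ‖x j‖ ≤ 1) :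
    weakL1Norm (fun j : Fin n => (F (α (j + 1)) - F (α j)) (x j)) ≤ semivar a b F := by
  refine weakL1Norm_le_of_forall_enorm_sum_smul_le fun c hc => ?_
  let c' : ℕ → ℝ := fun j => if h : j < n then c ⟨j, h⟩ else 0
  have hc' : ∀ j, ‖c' j‖ ≤ 1 := fun j => by
    by_cases h : j < n <;> simp [c', h, -Real.norm_eq_abs, hc]
  have hcx : ∀ j, ‖c' j • x j‖ ≤ 1 := fun j => by
    rw [norm_smul]
    exact mul_le_one₀ (hc' j) (norm_nonneg _) (hx j)
  simpa [Finset.sum_range, c', smul_sub] using hα.enorm_sum_le_semivar F hcx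

theorem IsDivision.sum_enorm_le_evar {n : ℕ} {α : ℕ → ℝ} (hα : IsDivision a b n α) (G : ℝ → E) :
    ∑ j ∈ Finset.range n, ‖G (α (j + 1)) - G (α j)‖ₑ ≤ evar a b G := by
  simp only [← ofReal_norm]
  rw [← ENNReal.ofReal_sum_of_nonneg fun _ _ => norm_nonneg _]
  exact le_iSup_of_le n <| le_iSup₂_of_le α hα le_rfl

theorem tsum_enorm_sub_le_evar {s : ℕ → ℝ} (hs : StrictMono s) (hs_zero : s 0 = a)
    (hs_lt : ∀ k, s k < b) (G : ℝ → E) :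
    ∑' k, ‖G (s (k + 1)) - G (s k)‖ₑ ≤ evar a b G := by
  refine ENNReal.tsum_le_of_sum_range_le fun N => ?_
  let α : ℕ → ℝ := fun j => if j ≤ N then s j else b
  have hα_of_le : ∀ j ≤ N, α j = s j := fun j hj => if_pos hj
  have hα : IsDivision a b (N + 1) α := by
    refine ⟨(hα_of_le 0 N.zero_le).trans hs_zero, if_neg (by simp), fun j hj => ?_⟩
    rw [hα_of_le j (Nat.lt_succ_iff.1 hj)]
    by_cases h : j + 1 ≤ N
    · rw [hα_of_le _ h]
      exact hs j.lt_succ_self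
    · simpa only [α, if_neg h] using hs_lt j
  calc ∑ k ∈ Finset.range N, ‖G (s (k + 1)) - G (s k)‖ₑ
      = ∑ k ∈ Finset.range N, ‖G (α (k + 1)) - G (α k)‖ₑ := by
        refine Finset.sum_congr rfl fun k hk => ?_
        have hkN : k < N := Finset.mem_range.1 hk
        rw [hα_of_le _ hkN, hα_of_le _ hkN.le]
    _ ≤ ∑ k ∈ Finset.range (N + 1), ‖G (α (k + 1)) - G (α k)‖ₑ :=
        Finset.sum_le_sum_of_subset (Finset.range_subset_range.2 N.le_succ)
    _ ≤ evar a b G := hα.sum_enorm_le_evar G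

theorem exists_norm_le_one_enorm_le_two_mul (A : X →L[ℝ] Y) :
    ∃ x, ‖x‖ ≤ 1 ∧ ‖A‖ₑ ≤ 2 * ‖A x‖ₑ := by
  rcases eq_or_ne A 0 with rfl | hA
  · exact ⟨0, by simp, by simp [← ofReal_norm]⟩
  obtain ⟨x, hx, hAx⟩ := A.exists_lt_apply_of_lt_opNorm (half_lt_self (norm_pos_iff.2 hA))
  refine ⟨x, hx.le, ?_⟩
  rw [← ofReal_norm, ← ofReal_norm, ← ENNReal.ofReal_ofNat, ← ENNReal.ofReal_mul zero_le_two]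
  exact ENNReal.ofReal_le_ofReal (by linarith)

theorem exists_forall_evar_le_mul_semivar (X Y : Type*) [NormedAddCommGroup X] [NormedSpace ℝ X]
    [NormedAddCommGroup Y] [NormedSpace ℝ Y] [FiniteDimensional ℝ Y] :
    ∃ K : NNReal, ∀ (a b : ℝ) (F : ℝ → X →L[ℝ] Y), evar a b F ≤ K * semivar a b F := by
  obtain ⟨K, hK⟩ := exists_forall_tsum_enorm_le_mul_weakL1Norm Y
  refine ⟨2 * K, fun a b F => iSup_le fun n => iSup₂_le fun α hα => ?_⟩
  choose x hx hFx using fun j => exists_norm_le_one_enorm_le_two_mul (F (α (j + 1)) - F (α j))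
  calc ENNReal.ofReal (∑ j ∈ Finset.range n, ‖F (α (j + 1)) - F (α j)‖)
      = ∑ j ∈ Finset.range n, ‖F (α (j + 1)) - F (α j)‖ₑ := by
        rw [ENNReal.ofReal_sum_of_nonneg fun _ _ => norm_nonneg _]
        simp only [ofReal_norm]
    _ ≤ ∑ j ∈ Finset.range n, 2 * ‖(F (α (j + 1)) - F (α j)) (x j)‖ₑ :=
        Finset.sum_le_sum fun j _ => hFx j
    _ = 2 * ∑' j : Fin n, ‖(F (α (j + 1)) - F (α j)) (x j)‖ₑ := by
        rw [← Finset.mul_sum, Finset.sum_range, tsum_fintype]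
    _ ≤ 2 * (K * semivar a b F) := by
        grw [hK, hα.weakL1Norm_le_semivar F hx]
    _ = ↑(2 * K) * semivar a b F := by
        push_cast
        rw [mul_assoc]

theorem semivar_smulRight_le {g : StrongDual ℝ X} (hg : ‖g‖ ≤ 1) (f : ℝ → Y) :
    semivar a b (fun t => g.smulRight (f t)) ≤ 2 * weakL1Norm f := by
  refine iSup_le fun n => iSup₂_le fun α hα => iSup₂_le fun x hx => ?_
  have hgx : ∀ j, ‖g (x j)‖ ≤ 1 := fun j =>
    (g.le_of_opNorm_le_of_le hg (hx j)).trans_eq (one_mul 1)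
  have enorm_sum_le : ∀ β : Fin n → ℝ, Function.Injective β →
      ‖∑ j : Fin n, g (x j) • f (β j)‖ₑ ≤ weakL1Norm f := fun β hβ =>
    (enorm_sum_smul_le_weakL1Norm (f ∘ β) fun j => hgx j).trans (weakL1Norm_comp_le hβ f)
  have hα_left : Function.Injective fun j : Fin n => α j := fun i j hij =>
    Fin.ext <| hα.strictMonoOn.injOn i.2.le j.2.le hij
  have hα_right : Function.Injective fun j : Fin n => α (j + 1) := fun i j hij =>
    Fin.ext <| Nat.succ_injective <| hα.strictMonoOn.injOn i.2 j.2 hij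
  calc ENNReal.ofReal ‖∑ j ∈ Finset.range n,
        (g.smulRight (f (α (j + 1))) - g.smulRight (f (α j))) (x j)‖
      = ‖∑ j : Fin n, g (x j) • f (α (j + 1)) - ∑ j : Fin n, g (x j) • f (α j)‖ₑ := by
        rw [ofReal_norm, Finset.sum_range, ← Finset.sum_sub_distrib]
        rfl
    _ ≤ weakL1Norm f + weakL1Norm f :=
        enorm_sub_le.trans (add_le_add (enorm_sum_le _ hα_right) (enorm_sum_le _ hα_left))
    _ = 2 * weakL1Norm f := (two_mul _).symm

theorem exists_weakL1Norm_lt_top_evar_eq_top (hY : ¬ FiniteDimensional ℝ Y) (hab : a < b) :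
    ∃ f : ℝ → Y, weakL1Norm f < ⊤ ∧ evar a b f = ⊤ := by
  obtain ⟨y, hy_weak, hy_norm⟩ := exists_weakL1Norm_lt_top_tsum_enorm_eq_top hY
  obtain ⟨s, hs, hs_zero⟩ := Nat.exists_strictMono' (⟨a, Set.left_mem_Ico.2 hab⟩ : Set.Ico a b)
  let t : ℕ → ℝ := fun k => s k
  have ht : StrictMono t := fun _ _ h => hs h
  let f : ℝ → Y := Function.extend (fun k => t (2 * k)) y 0
  have ht_even : Function.Injective fun k => t (2 * k) := fun k l hkl => by
    have := ht.injective hkl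
    lia
  have hf_even : ∀ k, f (t (2 * k)) = y k := ht_even.extend_apply y (0 : ℝ → Y)
  have hf_odd : ∀ k, f (t (2 * k + 1)) = 0 := fun k =>
    Function.extend_apply' y (0 : ℝ → Y) _ fun ⟨l, hl⟩ => by
      have := ht.injective hl
      lia
  refine ⟨f, (weakL1Norm_extend_zero ht_even y).trans_lt hy_weak, top_unique ?_⟩
  calc ⊤ = ∑' k, ‖f (t (2 * k + 1)) - f (t (2 * k))‖ₑ := by
        simp only [hf_even, hf_odd, zero_sub, enorm_neg, hy_norm]
    _ ≤ ∑' k, ‖f (t (k + 1)) - f (t k)‖ₑ :=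
        ENNReal.tsum_comp_le_tsum_of_injective (mul_right_injective₀ two_ne_zero)
          fun k => ‖f (t (k + 1)) - f (t k)‖ₑ
    _ ≤ evar a b f :=
        tsum_enorm_sub_le_evar ht (congrArg Subtype.val hs_zero) (fun k => (s k).2.2) f

theorem evar_smulRight {g : StrongDual ℝ X} (hg : ‖g‖ = 1) (f : ℝ → Y) :
    evar a b (fun t => g.smulRight (f t)) = evar a b f := by
  have hnorm : ∀ t t', ‖g.smulRight (f t) - g.smulRight (f t')‖ = ‖f t - f t'‖ := fun t t' => by
    have hsub : g.smulRight (f t) - g.smulRight (f t') = g.smulRight (f t - f t') := by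
      ext
      simp [smul_sub]
    rw [hsub, ContinuousLinearMap.norm_smulRight_apply, hg, one_mul]
  simp only [evar, hnorm]

theorem exists_semivar_lt_top_evar_eq_top (X : Type*) [NormedAddCommGroup X] [NormedSpace ℝ X]
    [Nontrivial X] (hY : ¬ FiniteDimensional ℝ Y) (hab : a < b) :
    ∃ F : ℝ → X →L[ℝ] Y, semivar a b F < ⊤ ∧ evar a b F = ⊤ := by
  obtain ⟨f, hf_weak, hf_evar⟩ := exists_weakL1Norm_lt_top_evar_eq_top hY hab
  obtain ⟨g, hg, -⟩ := exists_dual_vector' ℝ (0 : X)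
  exact ⟨fun t => g.smulRight (f t),
    (semivar_smulRight_le hg.le f).trans_lt (ENNReal.mul_lt_top ENNReal.ofNat_lt_top hf_weak),
    (evar_smulRight hg f).trans hf_evar⟩

end Variation

theorem finiteDimensional_iff_semivar_imp_bv_general
    {X Y : Type*} [NormedAddCommGroup X] [NormedSpace ℝ X] [Nontrivial X]
    [NormedAddCommGroup Y] [NormedSpace ℝ Y] {a b : ℝ} (hab : a < b) :
    FiniteDimensional ℝ Y ↔
      ∀ F : ℝ → X →L[ℝ] Y, semivar a b F < ⊤ → evar a b F < ⊤ := by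
  refine ⟨fun _ F hF => ?_, fun h => ?_⟩
  · obtain ⟨K, hK⟩ := exists_forall_evar_le_mul_semivar X Y
    exact (hK a b F).trans_lt (ENNReal.mul_lt_top ENNReal.coe_lt_top hF)
  · by_contra hY
    obtain ⟨F, hF_semivar, hF_evar⟩ := exists_semivar_lt_top_evar_eq_top X hY hab
    exact (h F hF_semivar).ne hF_evar

/-- `Y` is finite-dimensional iff every `F : [a,b] → L(X,Y)` of bounded
semivariation is of bounded variation. -/
theorem finiteDimensional_iff_semivar_imp_bv
    {X Y : Type*} [NormedAddCommGroup X] [NormedSpace ℝ X] [CompleteSpace X] [Nontrivial X]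
    [NormedAddCommGroup Y] [NormedSpace ℝ Y] [CompleteSpace Y]
    (a b : ℝ) (hab : a < b) :
    FiniteDimensional ℝ Y ↔
      ∀ F : ℝ → X →L[ℝ] Y, semivar a b F < ⊤ → evar a b F < ⊤ := by
  exact finiteDimensional_iff_semivar_imp_bv_general hab
end
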